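/- arXiv:1309.5898 — 2 statements merged into one kernel-verified Lean document; each statement's English description precedes it below -/
import Mathlib

section
/- Let m = p + q with p,q ≥ 1, and let L ∈ L_{m,n} be a decomposable quantum channel: there exist quantum channels L_1 ∈ L_{p,n} and L_2 ∈ L_{q,n} such that, writing each X ∈ ℂ^{m×m} in 2×2 block form with diagonal blocks X_{11} ∈ ℂ^{p×p} and X_{22} ∈ ℂ^{q×q}, one has L(X) = L_1(X_{11}) + L_2(X_{22}). If L_1 is not an extreme point of L_{p,n}, or L_2 is not an extreme point of L_{q,n}, or rank Z(L_1) · rank Z(L_2) > p·q, then L is not an extreme point of L_{m,n}. -/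
open Matrix
open scoped ComplexOrder

/-- The Choi matrix of a linear map `L` from `m × m` to `n × n` complex matrices:
its `((i,p),(j,q))` entry is the `(p,q)` entry of `L(E_{ij})`. -/
def choi (m n : ℕ) (L : Matrix (Fin m) (Fin m) ℂ →ₗ[ℂ] Matrix (Fin n) (Fin n) ℂ) :
    Matrix (Fin m × Fin n) (Fin m × Fin n) ℂ :=
  Matrix.of fun ip jq => L (Matrix.single ip.1 jq.1 (1 : ℂ)) ip.2 jq.2

/-- `L` is a quantum channel: it admits a Kraus representation
`L(X) = ∑ Aᵢ X Aᵢ*` with `∑ Aᵢ* Aᵢ = I`. -/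
def IsChannel (m n : ℕ) (L : Matrix (Fin m) (Fin m) ℂ →ₗ[ℂ] Matrix (Fin n) (Fin n) ℂ) : Prop :=
  ∃ (k : ℕ) (A : Fin k → Matrix (Fin n) (Fin m) ℂ),
    (∀ X, L X = ∑ i, A i * X * (A i)ᴴ) ∧ ∑ i, (A i)ᴴ * A i = 1

/-- `L` is an extreme point of the convex set of quantum channels. -/
def IsExtremeChannel (m n : ℕ)
    (L : Matrix (Fin m) (Fin m) ℂ →ₗ[ℂ] Matrix (Fin n) (Fin n) ℂ) : Prop :=
  IsChannel m n L ∧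
    ∀ L₁ L₂ : Matrix (Fin m) (Fin m) ℂ →ₗ[ℂ] Matrix (Fin n) (Fin n) ℂ,
      IsChannel m n L₁ → IsChannel m n L₂ → ∀ t : ℝ, 0 < t → t < 1 →
      L = (t : ℂ) • L₁ + ((1 - t : ℝ) : ℂ) • L₂ → L₁ = L ∧ L₂ = L

/-!
By Choi's criterion, a channel with linearly independent Kraus operators `A a` can only be extreme
if the products `(A a)ᴴ * A b` are linearly independent: a linear relation between them is a
coefficient matrix whose Kraus map annihilates traces, and a small Hermitian multiple of it can be
both added to and subtracted from the channel.

If `A i` and `B j` are minimal families of Kraus operators of `L₁` and `L₂`, of sizes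
`rank Z(L₁)` and `rank Z(L₂)`, then `[A i, 0]` and `[0, B j]` are linearly independent Kraus
operators of `L`. So if `L` is extreme, the `p × q` matrices `(A i)ᴴ * B j` are linearly
independent, and there are at most `p * q` of them. Moreover `L₁ ↦ L₁ ⊕ L₂` is affine and injective,
so a proper convex decomposition of a summand yields one of `L`.
-/

theorem exists_eq_mul_conjTranspose_of_posSemidef {𝕜 ι : Type*} [RCLike 𝕜]
    [Fintype ι] {M : Matrix ι ι 𝕜} (hM : M.PosSemidef) :
    ∃ V : Matrix ι (Fin M.rank) 𝕜, LinearIndependent 𝕜 V.col ∧ M = V * Vᴴ := by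
  classical
  let U := hM.1.eigenvectorUnitary
  let S : Matrix ι ι 𝕜 := U * diagonal fun k => (√(hM.1.eigenvalues k) : 𝕜)
  have hS : M = S * Sᴴ := by
    have hsqrt (k) : (√(hM.1.eigenvalues k) : 𝕜) * √(hM.1.eigenvalues k) = hM.1.eigenvalues k :=
      mod_cast Real.mul_self_sqrt (hM.eigenvalues_nonneg k)
    conv_lhs => rw [hM.1.spectral_theorem, Unitary.conjStarAlgAut_apply]
    simp [S, U, Matrix.mul_assoc, ← Matrix.mul_assoc (diagonal _) (diagonal _),
      diagonal_conjTranspose, star_eq_conjTranspose, Pi.star_def, hsqrt, Function.comp_def]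
  obtain ⟨e⟩ : Nonempty (Fin M.rank ≃ {k // hM.1.eigenvalues k ≠ 0}) :=
    ⟨Fintype.equivOfCardEq (by rw [Fintype.card_fin, hM.1.rank_eq_card_non_zero_eigs])⟩
  let V : Matrix ι (Fin M.rank) 𝕜 := S.submatrix id fun a => e a
  have hV : S * Sᴴ = V * Vᴴ := by
    ext i j
    refine (Fintype.sum_of_injective (fun a => (e a : ι)) (Subtype.val_injective.comp e.injective)
      _ _ (fun k hk => ?_) fun a => rfl).symm
    have hk₀ : hM.1.eigenvalues k = 0 := by
      by_contra hne
      exact hk ⟨e.symm ⟨k, hne⟩, by simp⟩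
    simp [S, hk₀]
  have hVrank : V.rank = M.rank := by
    rw [← rank_self_mul_conjTranspose, ← hV, ← hS]
  refine ⟨V, ?_, hS.trans hV⟩
  rw [linearIndependent_iff_card_eq_finrank_span, Set.finrank, ← rank_eq_finrank_span_cols,
    hVrank, Fintype.card_fin]

open scoped Matrix.Norms.L2Operator MatrixOrder in
theorem exists_pos_posSemidef_one_add_smul_sub_smul {ι : Type*} [Finite ι] [DecidableEq ι]
    {G : Matrix ι ι ℂ} (hG : G.IsHermitian) :
    ∃ c : ℝ, 0 < c ∧ (1 + c • G).PosSemidef ∧ (1 - c • G).PosSemidef := by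
  cases nonempty_fintype ι
  let c : ℝ := (‖G‖ + 1)⁻¹
  have hc : 0 < c := by positivity
  have hcG : IsSelfAdjoint (c • G) := IsSelfAdjoint.smul (.all c) hG
  have hnorm : ‖c • G‖ ≤ 1 := by
    rw [norm_smul, Real.norm_of_nonneg hc.le, inv_mul_le_one₀ (by positivity)]
    linarith
  have hone : algebraMap ℝ (Matrix ι ι ℂ) ‖c • G‖ ≤ 1 :=
    (algebraMap_mono _ hnorm).trans_eq (map_one _)
  refine ⟨c, hc, ?_, ?_⟩
  · rw [← nonneg_iff_posSemidef, ← neg_le_iff_add_nonneg']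
    exact (neg_le_neg hone).trans hcG.neg_algebraMap_norm_le_self
  · exact le_iff.mp (hcG.le_algebraMap_norm_self.trans hone)

section InjectiveMul

variable {m ι κ R : Type*} [Fintype ι] [CommRing R] {V : Matrix m ι R}

theorem mul_right_injective_of_linearIndependent_col (hV : LinearIndependent R V.col) :
    Function.Injective fun G : Matrix ι κ R => V * G :=
  fun _ _ h => ext_col fun j => mulVec_injective_iff.mpr hV congr(($h).col j)

theorem mul_mul_conjTranspose_injective_of_linearIndependent_col [StarRing R]
    (hV : LinearIndependent R V.col) :
    Function.Injective fun G : Matrix ι ι R => V * G * Vᴴ := by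
  intro G H h
  have hGH : G * Vᴴ = H * Vᴴ :=
    mul_right_injective_of_linearIndependent_col hV (by simpa only [Matrix.mul_assoc] using h)
  have hVGH : V * Gᴴ = V * Hᴴ := by simpa using congrArg conjTranspose hGH
  exact conjTranspose_injective (mul_right_injective_of_linearIndependent_col hV hVGH)

end InjectiveMul

section VecColumns

variable {R m n ι : Type*}

/-- The matrix whose columns are the vectorizations of the members of a family of matrices. It
exhibits the Choi matrix of `krausMap A G` as a congruence of `G`. -/
def vecColumns (A : ι → Matrix n m R) : Matrix (m × n) ι R :=
  (Matrix.of fun a => vec (A a))ᵀ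

theorem linearIndependent_col_vecColumns [CommRing R] {A : ι → Matrix n m R} :
    LinearIndependent R (vecColumns A).col ↔ LinearIndependent R A := by
  let vecLinearMap : Matrix n m R →ₗ[R] m × n → R :=
    { toFun := vec, map_add' := vec_add, map_smul' := vec_smul }
  exact vecLinearMap.linearIndependent_iff_of_injOn vec_bijective.injective.injOn

end VecColumns

section KrausMap

variable {ι m n : Type*} [Fintype ι] [Fintype m]

/-- The map `X ↦ ∑ G a b • A a X (A b)*` with operators `A` and coefficient matrix `G`, as a linear
function of `G`. For `G = 1` it is the completely positive map with Kraus operators `A`; the other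
coefficient matrices serve to perturb it. -/
def krausMap (A : ι → Matrix n m ℂ) :
    Matrix ι ι ℂ →ₗ[ℂ] Matrix m m ℂ →ₗ[ℂ] Matrix n n ℂ :=
  LinearMap.mk₂ ℂ (fun G X => ∑ a, ∑ b, G a b • (A a * X * (A b)ᴴ))
    (by simp [add_smul, Finset.sum_add_distrib])
    (by simp [mul_smul, Finset.smul_sum])
    (by simp [Matrix.mul_add, Matrix.add_mul, Finset.sum_add_distrib])
    (fun c G X => by simp only [Matrix.mul_smul, Matrix.smul_mul, Finset.smul_sum, smul_comm c])

theorem krausMap_apply (A : ι → Matrix n m ℂ) (G : Matrix ι ι ℂ) (X : Matrix m m ℂ) :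
    krausMap A G X = ∑ a, ∑ b, G a b • (A a * X * (A b)ᴴ) := rfl

theorem krausMap_one_apply [DecidableEq ι] (A : ι → Matrix n m ℂ) (X : Matrix m m ℂ) :
    krausMap A 1 X = ∑ a, A a * X * (A a)ᴴ := by
  simp [krausMap_apply, Matrix.one_apply, ite_smul]

theorem conjTranspose_krausMap_apply (A : ι → Matrix n m ℂ) (G : Matrix ι ι ℂ)
    (X : Matrix m m ℂ) : (krausMap A G X)ᴴ = krausMap A Gᴴ Xᴴ := by
  simp only [krausMap_apply, conjTranspose_sum, conjTranspose_smul, conjTranspose_mul,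
    conjTranspose_conjTranspose, conjTranspose_apply, Matrix.mul_assoc]
  exact Finset.sum_comm

theorem trace_krausMap_apply [Fintype n] (A : ι → Matrix n m ℂ) (G : Matrix ι ι ℂ)
    (X : Matrix m m ℂ) :
    (krausMap A G X).trace = ((∑ a, ∑ b, G a b • ((A b)ᴴ * A a)) * X).trace := by
  simp only [krausMap_apply, trace_sum, trace_smul, Matrix.sum_mul, Matrix.smul_mul,
    trace_mul_cycle (A _) X]

theorem trace_krausMap_one_apply [Fintype n] [DecidableEq ι] (A : ι → Matrix n m ℂ)
    (X : Matrix m m ℂ) : (krausMap A 1 X).trace = ((∑ a, (A a)ᴴ * A a) * X).trace := by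
  simp [trace_krausMap_apply, Matrix.one_apply, ite_smul]

end KrausMap

section Choi

variable {ι : Type*} [Fintype ι] {m n : ℕ}

theorem choi_krausMap (A : ι → Matrix (Fin n) (Fin m) ℂ) (G : Matrix ι ι ℂ) :
    choi m n (krausMap A G) = vecColumns A * G * (vecColumns A)ᴴ := by
  ext x y
  simp only [choi, krausMap_apply, vecColumns, Matrix.of_apply, Matrix.sum_apply, Matrix.smul_apply]
  simp only [Matrix.mul_apply, Finset.sum_mul, conjTranspose_apply, transpose_apply]
  rw [Finset.sum_comm]
  simp [Matrix.single_apply, ite_and, mul_assoc, mul_left_comm]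

theorem posSemidef_choi_krausMap (A : ι → Matrix (Fin n) (Fin m) ℂ) {G : Matrix ι ι ℂ}
    (hG : G.PosSemidef) : (choi m n (krausMap A G)).PosSemidef := by
  rw [choi_krausMap]
  exact hG.mul_mul_conjTranspose_same _

theorem choi_injective : Function.Injective (choi m n) := by
  intro L M h
  refine Matrix.ext_linearMap ℂ fun i j => LinearMap.ext_ring (Matrix.ext fun p q => ?_)
  exact congr($h (i, p) (j, q))

theorem krausMap_injective {A : ι → Matrix (Fin n) (Fin m) ℂ} (hA : LinearIndependent ℂ A) :
    Function.Injective (krausMap A) := by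
  intro G H h
  have hV : LinearIndependent ℂ (vecColumns A).col := linearIndependent_col_vecColumns.mpr hA
  apply mul_mul_conjTranspose_injective_of_linearIndependent_col hV
  simp only [← choi_krausMap, h]

end Choi

section Channel

variable {m n : ℕ} {L : Matrix (Fin m) (Fin m) ℂ →ₗ[ℂ] Matrix (Fin n) (Fin n) ℂ}

theorem exists_linearIndependent_eq_krausMap_one (hL : (choi m n L).PosSemidef) :
    ∃ A : Fin (choi m n L).rank → Matrix (Fin n) (Fin m) ℂ,
      LinearIndependent ℂ A ∧ L = krausMap A 1 := by
  obtain ⟨V, hV, hLV⟩ := exists_eq_mul_conjTranspose_of_posSemidef hL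
  let A : Fin (choi m n L).rank → Matrix (Fin n) (Fin m) ℂ := fun a =>
    Matrix.of fun p i => V (i, p) a
  have hAV : vecColumns A = V := rfl
  refine ⟨A, linearIndependent_col_vecColumns.mp (hAV ▸ hV), choi_injective ?_⟩
  rw [choi_krausMap, hAV, Matrix.mul_one, ← hLV]

theorem isChannel_iff_posSemidef_choi_and_trace :
    IsChannel m n L ↔ (choi m n L).PosSemidef ∧ ∀ X, (L X).trace = X.trace := by
  constructor
  · rintro ⟨k, A, hLA, hA⟩
    obtain rfl : L = krausMap A 1 := LinearMap.ext fun X => by rw [hLA, krausMap_one_apply]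
    exact ⟨posSemidef_choi_krausMap A .one,
      fun X => by rw [trace_krausMap_one_apply, hA, Matrix.one_mul]⟩
  · rintro ⟨hL, htr⟩
    obtain ⟨A, -, hLA⟩ := exists_linearIndependent_eq_krausMap_one hL
    refine ⟨_, A, fun X => by rw [← krausMap_one_apply, ← hLA],
      ext_iff_trace_mul_right.mpr fun X => ?_⟩
    rw [← trace_krausMap_one_apply, ← hLA, htr, Matrix.one_mul]

end Channel

section Extreme

variable {m n : ℕ}

theorem IsExtremeChannel.eq_zero_of_isChannel_add_of_isChannel_sub
    {L D : Matrix (Fin m) (Fin m) ℂ →ₗ[ℂ] Matrix (Fin n) (Fin n) ℂ} (hL : IsExtremeChannel m n L)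
    (hadd : IsChannel m n (L + D)) (hsub : IsChannel m n (L - D)) : D = 0 := by
  have hmid : L = ((1 / 2 : ℝ) : ℂ) • (L + D) + ((1 - 1 / 2 : ℝ) : ℂ) • (L - D) := by
    push_cast
    module
  exact add_eq_left.mp (hL.2 _ _ hadd hsub (1 / 2) (by norm_num) (by norm_num) hmid).1

variable {ι : Type*} [Fintype ι] {A : ι → Matrix (Fin n) (Fin m) ℂ}

theorem isChannel_krausMap_add {G H : Matrix ι ι ℂ} (hG : IsChannel m n (krausMap A G))
    (htr : ∀ X, (krausMap A H X).trace = 0) (hGH : (G + H).PosSemidef) :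
    IsChannel m n (krausMap A G + krausMap A H) := by
  rw [isChannel_iff_posSemidef_choi_and_trace] at hG ⊢
  refine ⟨?_, fun X => by rw [LinearMap.add_apply, trace_add, hG.2, htr, add_zero]⟩
  rw [← map_add]
  exact posSemidef_choi_krausMap A hGH

variable [DecidableEq ι]

theorem IsExtremeChannel.eq_zero_of_isHermitian
    (hL : IsExtremeChannel m n (krausMap A 1)) (hA : LinearIndependent ℂ A) {G : Matrix ι ι ℂ}
    (hG : G.IsHermitian) (htr : ∀ X, (krausMap A G X).trace = 0) : G = 0 := by
  obtain ⟨c, hc, hadd, hsub⟩ := exists_pos_posSemidef_one_add_smul_sub_smul hG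
  have htr' (d : ℝ) (X) : (krausMap A (d • G) X).trace = 0 := by
    rw [← Complex.coe_smul d G, map_smul, LinearMap.smul_apply, trace_smul, htr, smul_zero]
  have hD : krausMap A (c • G) = 0 := by
    refine hL.eq_zero_of_isChannel_add_of_isChannel_sub
      (isChannel_krausMap_add hL.1 (htr' c) hadd) ?_
    rw [sub_eq_add_neg, ← map_neg, ← neg_smul]
    refine isChannel_krausMap_add hL.1 (htr' (-c)) ?_
    rwa [neg_smul, ← sub_eq_add_neg]
  have hcG : c • G = 0 := krausMap_injective hA (hD.trans (map_zero _).symm)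
  exact (smul_eq_zero.mp hcG).resolve_left hc.ne'

theorem IsExtremeChannel.eq_zero_of_trace_krausMap_eq_zero
    (hL : IsExtremeChannel m n (krausMap A 1)) (hA : LinearIndependent ℂ A) {G : Matrix ι ι ℂ}
    (htr : ∀ X, (krausMap A G X).trace = 0) : G = 0 := by
  have htr' (X) : (krausMap A Gᴴ X).trace = 0 := by
    rw [← conjTranspose_conjTranspose X, ← conjTranspose_krausMap_apply, trace_conjTranspose, htr,
      star_zero]
  have hskew : G + Gᴴ = 0 := hL.eq_zero_of_isHermitian hA (isHermitian_add_transpose_self G)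
    fun X => by simp [htr, htr']
  -- Since `Gᴴ = -G`, the multiple `I • G` is Hermitian.
  have hI : Complex.I • G = 0 := by
    refine hL.eq_zero_of_isHermitian hA ?_ fun X => by simp [htr]
    rw [Matrix.IsHermitian, conjTranspose_smul, ← neg_eq_of_add_eq_zero_right hskew]
    simp
  exact (smul_eq_zero.mp hI).resolve_left Complex.I_ne_zero

theorem IsExtremeChannel.linearIndependent_conjTranspose_mul
    (hL : IsExtremeChannel m n (krausMap A 1)) (hA : LinearIndependent ℂ A) :
    LinearIndependent ℂ fun ab : ι × ι => (A ab.1)ᴴ * A ab.2 := by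
  refine Fintype.linearIndependent_iff.mpr fun g hg => ?_
  have hG : (Matrix.of fun b a => g (a, b)) = 0 := by
    refine hL.eq_zero_of_trace_krausMap_eq_zero hA fun X => ?_
    rw [Fintype.sum_prod_type_right] at hg
    simp only [trace_krausMap_apply, Matrix.of_apply, hg, Matrix.zero_mul, trace_zero]
  exact fun ab => congr($hG ab.2 ab.1)

end Extreme

section DirectSum

variable {p q m n : Type*}

/-- The decomposable map `X ↦ L₁ X₁₁ + L₂ X₂₂`, where `X₁₁` and `X₂₂` are the diagonal blocks of `X`
for the splitting `e` of its index set. -/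
def directSum (e : p ⊕ q ≃ m) (L₁ : Matrix p p ℂ →ₗ[ℂ] Matrix n n ℂ)
    (L₂ : Matrix q q ℂ →ₗ[ℂ] Matrix n n ℂ) : Matrix m m ℂ →ₗ[ℂ] Matrix n n ℂ where
  toFun X := L₁ (X.submatrix (e ∘ Sum.inl) (e ∘ Sum.inl)) +
    L₂ (X.submatrix (e ∘ Sum.inr) (e ∘ Sum.inr))
  map_add' X Y := by
    simp only [submatrix_add, Pi.add_apply, map_add]
    abel
  map_smul' c X := by
    simp only [submatrix_smul, Pi.smul_apply, map_smul, smul_add, RingHom.id_apply]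

theorem directSum_apply (e : p ⊕ q ≃ m) (L₁ : Matrix p p ℂ →ₗ[ℂ] Matrix n n ℂ)
    (L₂ : Matrix q q ℂ →ₗ[ℂ] Matrix n n ℂ) (X : Matrix m m ℂ) :
    directSum e L₁ L₂ X = L₁ (X.submatrix (e ∘ Sum.inl) (e ∘ Sum.inl)) +
      L₂ (X.submatrix (e ∘ Sum.inr) (e ∘ Sum.inr)) := rfl

theorem directSum_sumComm (e : p ⊕ q ≃ m) (L₁ : Matrix p p ℂ →ₗ[ℂ] Matrix n n ℂ)
    (L₂ : Matrix q q ℂ →ₗ[ℂ] Matrix n n ℂ) :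
    directSum ((Equiv.sumComm q p).trans e) L₂ L₁ = directSum e L₁ L₂ :=
  LinearMap.ext fun _ => add_comm _ _

theorem directSum_left_injective (e : p ⊕ q ≃ m) (L₂ : Matrix q q ℂ →ₗ[ℂ] Matrix n n ℂ) :
    Function.Injective fun L₁ => directSum e L₁ L₂ := by
  intro L₁ M₁ h
  refine LinearMap.ext fun X => ?_
  let Y : Matrix m m ℂ := (fromBlocks X 0 0 0).submatrix e.symm e.symm
  have hY₁ : Y.submatrix (e ∘ Sum.inl) (e ∘ Sum.inl) = X := by ext; simp [Y]
  have hY₂ : Y.submatrix (e ∘ Sum.inr) (e ∘ Sum.inr) = 0 := by ext; simp [Y]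
  simpa only [directSum_apply, hY₁, hY₂, map_zero, add_zero] using LinearMap.congr_fun h Y

theorem directSum_affineCombination_left (e : p ⊕ q ≃ m)
    (L₁ M₁ : Matrix p p ℂ →ₗ[ℂ] Matrix n n ℂ) (L₂ : Matrix q q ℂ →ₗ[ℂ] Matrix n n ℂ)
    {s t : ℂ} (hst : s + t = 1) :
    directSum e (s • L₁ + t • M₁) L₂ = s • directSum e L₁ L₂ + t • directSum e M₁ L₂ := by
  obtain rfl := eq_sub_of_add_eq hst
  refine LinearMap.ext fun X => ?_
  simp only [directSum_apply, LinearMap.add_apply, LinearMap.smul_apply]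
  module

variable [DecidableEq m]

/-- The matrix of the coordinate projection `x ↦ x ∘ f`. Multiplying by it on the right extends
an operator by zero from a coordinate block. -/
def coordProj (f : p → m) : Matrix p m ℂ :=
  (1 : Matrix m m ℂ).submatrix f id

theorem coordProj_mul_mul_conjTranspose [Fintype m] (f : p → m) (g : q → m) (X : Matrix m m ℂ) :
    coordProj f * X * (coordProj g)ᴴ = X.submatrix f g := by
  ext i j
  simp [coordProj, Matrix.mul_apply, Matrix.one_apply]

theorem coordProj_mul_conjTranspose [Fintype m] (f : p → m) (g : q → m) :
    coordProj f * (coordProj g)ᴴ = (1 : Matrix m m ℂ).submatrix f g := by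
  simpa using coordProj_mul_mul_conjTranspose f g 1

variable {ι κ : Type*} [Fintype p] [Fintype q]

/-- The Kraus operators `[A i, 0]` and `[0, B j]` of the direct sum of the maps with Kraus operators
`A` and `B`. -/
def directSumKraus (e : p ⊕ q ≃ m) (A : ι → Matrix n p ℂ) (B : κ → Matrix n q ℂ) :
    ι ⊕ κ → Matrix n m ℂ :=
  Sum.elim (fun i => A i * coordProj (e ∘ Sum.inl)) (fun j => B j * coordProj (e ∘ Sum.inr))

theorem directSum_krausMap_one [Fintype m] [Fintype ι] [Fintype κ] [DecidableEq ι]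
    [DecidableEq κ] (e : p ⊕ q ≃ m) (A : ι → Matrix n p ℂ) (B : κ → Matrix n q ℂ) :
    directSum e (krausMap A 1) (krausMap B 1) = krausMap (directSumKraus e A B) 1 := by
  refine LinearMap.ext fun X => ?_
  simp only [directSum_apply, krausMap_one_apply, directSumKraus, Fintype.sum_sum_type,
    Sum.elim_inl, Sum.elim_inr, conjTranspose_mul, ← coordProj_mul_mul_conjTranspose,
    Matrix.mul_assoc]

theorem linearIndependent_directSumKraus [Finite ι] [Finite κ] (e : p ⊕ q ≃ m)
    {A : ι → Matrix n p ℂ} {B : κ → Matrix n q ℂ} (hA : LinearIndependent ℂ A)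
    (hB : LinearIndependent ℂ B) : LinearIndependent ℂ (directSumKraus e A B) := by
  classical
  cases nonempty_fintype ι
  cases nonempty_fintype κ
  have := Fintype.ofEquiv _ e
  refine Fintype.linearIndependent_iff.mpr fun c hc => ?_
  let P : Matrix p m ℂ := coordProj (e ∘ Sum.inl)
  let Q : Matrix q m ℂ := coordProj (e ∘ Sum.inr)
  have hPP : P * Pᴴ = 1 := by
    rw [coordProj_mul_conjTranspose, submatrix_one _ (e.injective.comp Sum.inl_injective)]
  have hQQ : Q * Qᴴ = 1 := by
    rw [coordProj_mul_conjTranspose, submatrix_one _ (e.injective.comp Sum.inr_injective)]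
  have hPQ : P * Qᴴ = 0 := by
    rw [coordProj_mul_conjTranspose]
    ext
    simp
  have hQP : Q * Pᴴ = 0 := by simpa using congrArg conjTranspose hPQ
  have hsum : (∑ i, c (.inl i) • A i) * P + (∑ j, c (.inr j) • B j) * Q = 0 := by
    simpa [directSumKraus, Matrix.sum_mul] using hc
  have hcA : ∑ i, c (.inl i) • A i = 0 := by
    simpa [Matrix.add_mul, Matrix.mul_assoc, hPP, hQP] using congr($hsum * Pᴴ)
  have hcB : ∑ j, c (.inr j) • B j = 0 := by
    simpa [Matrix.add_mul, Matrix.mul_assoc, hPQ, hQQ] using congr($hsum * Qᴴ)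
  rintro (i | j)
  · exact Fintype.linearIndependent_iff.mp hA _ hcA i
  · exact Fintype.linearIndependent_iff.mp hB _ hcB j

end DirectSum

section DecomposableChannel

variable {p q m n : ℕ} {e : Fin p ⊕ Fin q ≃ Fin m}
  {L₁ : Matrix (Fin p) (Fin p) ℂ →ₗ[ℂ] Matrix (Fin n) (Fin n) ℂ}
  {L₂ : Matrix (Fin q) (Fin q) ℂ →ₗ[ℂ] Matrix (Fin n) (Fin n) ℂ}

theorem isChannel_directSum (h₁ : IsChannel p n L₁) (h₂ : IsChannel q n L₂) :
    IsChannel m n (directSum e L₁ L₂) := by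
  rw [isChannel_iff_posSemidef_choi_and_trace] at h₁ h₂ ⊢
  obtain ⟨A, -, hA⟩ := exists_linearIndependent_eq_krausMap_one h₁.1
  obtain ⟨B, -, hB⟩ := exists_linearIndependent_eq_krausMap_one h₂.1
  constructor
  · rw [hA, hB, directSum_krausMap_one]
    exact posSemidef_choi_krausMap _ .one
  · intro X
    rw [directSum_apply, trace_add, h₁.2, h₂.2]
    simp [trace, ← e.sum_comp fun i => X i i]

theorem IsExtremeChannel.of_directSum_left (h : IsExtremeChannel m n (directSum e L₁ L₂))
    (h₁ : IsChannel p n L₁) (h₂ : IsChannel q n L₂) : IsExtremeChannel p n L₁ := by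
  refine ⟨h₁, fun M N hM hN t ht₀ ht₁ hMN => ?_⟩
  have hconv : directSum e L₁ L₂ =
      (t : ℂ) • directSum e M L₂ + ((1 - t : ℝ) : ℂ) • directSum e N L₂ := by
    rw [hMN, directSum_affineCombination_left e M N L₂ (by simp)]
  obtain ⟨hM', hN'⟩ :=
    h.2 _ _ (isChannel_directSum hM h₂) (isChannel_directSum hN h₂) t ht₀ ht₁ hconv
  exact ⟨directSum_left_injective e L₂ hM', directSum_left_injective e L₂ hN'⟩

theorem IsExtremeChannel.of_directSum_right (h : IsExtremeChannel m n (directSum e L₁ L₂))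
    (h₁ : IsChannel p n L₁) (h₂ : IsChannel q n L₂) : IsExtremeChannel q n L₂ :=
  of_directSum_left (directSum_sumComm e L₁ L₂ ▸ h) h₂ h₁

theorem IsExtremeChannel.rank_choi_mul_rank_choi_le
    (h : IsExtremeChannel m n (directSum e L₁ L₂)) (h₁ : IsChannel p n L₁)
    (h₂ : IsChannel q n L₂) :
    (choi p n L₁).rank * (choi q n L₂).rank ≤ p * q := by
  rw [isChannel_iff_posSemidef_choi_and_trace] at h₁ h₂
  obtain ⟨A, hA, hLA⟩ := exists_linearIndependent_eq_krausMap_one h₁.1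
  obtain ⟨B, hB, hLB⟩ := exists_linearIndependent_eq_krausMap_one h₂.1
  rw [hLA, hLB, directSum_krausMap_one] at h
  have hK := h.linearIndependent_conjTranspose_mul (linearIndependent_directSumKraus e hA hB)
  let T := mulLeftLinearMap (Fin m) ℂ (coordProj (e ∘ Sum.inl))ᴴ ∘ₗ
    mulRightLinearMap (Fin p) ℂ (coordProj (e ∘ Sum.inr))
  have hAB : LinearIndependent ℂ fun ij : Fin _ × Fin _ => (A ij.1)ᴴ * B ij.2 := by
    refine .of_comp T ?_
    convert hK.comp (Prod.map Sum.inl Sum.inr) (Sum.inl_injective.prodMap Sum.inr_injective)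
    ext1 ij
    simp [T, directSumKraus, Matrix.mul_assoc]
  simpa [Module.finrank_matrix] using hAB.fintype_card_le_finrank

end DecomposableChannel

/-- a decomposable channel `L = L₁ ⊕ L₂` is not extreme if `L₁` is not extreme,
or `L₂` is not extreme, or `rank Z(L₁) · rank Z(L₂) > p·q`. -/
theorem stmt13 (p q n : ℕ) (hp : 1 ≤ p) (hq : 1 ≤ q)
    (L : Matrix (Fin (p + q)) (Fin (p + q)) ℂ →ₗ[ℂ] Matrix (Fin n) (Fin n) ℂ)
    (L₁ : Matrix (Fin p) (Fin p) ℂ →ₗ[ℂ] Matrix (Fin n) (Fin n) ℂ)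
    (L₂ : Matrix (Fin q) (Fin q) ℂ →ₗ[ℂ] Matrix (Fin n) (Fin n) ℂ)
    (hL : IsChannel (p + q) n L) (hL₁ : IsChannel p n L₁) (hL₂ : IsChannel q n L₂)
    (hdec : ∀ X : Matrix (Fin (p + q)) (Fin (p + q)) ℂ,
      L X = L₁ (Matrix.of fun i j => X (Fin.castAdd q i) (Fin.castAdd q j)) +
            L₂ (Matrix.of fun i j => X (Fin.natAdd p i) (Fin.natAdd p j)))
    (h : ¬ IsExtremeChannel p n L₁ ∨ ¬ IsExtremeChannel q n L₂ ∨
      p * q < (choi p n L₁).rank * (choi q n L₂).rank) :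
    ¬ IsExtremeChannel (p + q) n L := by
  obtain rfl : L = directSum finSumFinEquiv L₁ L₂ := LinearMap.ext hdec
  intro hext
  rcases h with h | h | h
  · exact h (hext.of_directSum_left hL₁ hL₂)
  · exact h (hext.of_directSum_right hL₁ hL₂)
  · exact h.not_ge (hext.rank_choi_mul_rank_choi_le hL₁ hL₂)
end

section
/- Let m,n ≥ 2, let A_1,…,A_l ∈ ℂ^{n×m} with l ≥ 2 be linearly independent, and let L(X) = ∑_{i=1}^l A_i X A_i^*. For j ∈ {1,…,m} let B_j ∈ ℂ^{n×l} be the matrix whose i-th column is A_i e_j, and let r be the dimension of the complex span of B_1,…,B_m. If p is a positive integer with p(n + l − p) + r ≥ nl + 1, then there exists a nonzero vector u ∈ ℂ^m such that L(uu^*) is nonzero and has rank at most p. In particular, if r ≥ (n−1)(l−1) + 1, then there exists a nonzero u ∈ ℂ^m with rank L(uu^*) = 1. -/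
open Matrix
open scoped ComplexOrder

/-
With B = ∑ u_j B_j one has L(uu^*) = B B^*, so it suffices to find a nonzero matrix of rank at most
p in V = span(B_1, ..., B_m).

The matrices of rank at most p form the cone cut out by the (p + 1)-minors, and on this cone a
matrix with invertible top left p × p block P, written in blocks [P, Q; R, S], is freely determined
by P, Q and R, since S = R P⁻¹ Q. Hence the coordinate ring has transcendence degree at least
nl - (n - p)(l - p). If the cone met V only in zero, then by the Nullstellensatz the codim V linear
forms defining V would generate an ideal of the coordinate ring containing a power of the irrelevant
ideal; by graded Nakayama the coordinate ring would be finite over the subalgebra they generate, and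
its transcendence degree would be at most codim V. So dim V > (n - p)(l - p) forces a nonzero
intersection.
-/

section Minors

variable {K m n : Type*} [Field K] [Finite m] [Fintype n]

theorem exists_linearIndependent_row_comp_of_le_rank {A : Matrix m n K} {q : ℕ}
    (h : q ≤ A.rank) : ∃ e : Fin q → m, LinearIndependent K (A.row ∘ e) := by
  rw [rank_eq_finrank_span_row] at h
  obtain ⟨v, hv, -, hli⟩ := Submodule.exists_fun_fin_finrank_span_eq K (Set.range A.row)
  choose e he using hv
  obtain rfl : A.row ∘ e = v := funext he
  exact ⟨e ∘ Fin.castLE h, hli.comp _ (Fin.castLE_injective h)⟩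

theorem le_rank_iff_exists_submatrix_det_ne_zero {A : Matrix m n K} {q : ℕ} :
    q ≤ A.rank ↔ ∃ (e : Fin q → m) (f : Fin q → n), (A.submatrix e f).det ≠ 0 := by
  constructor
  · intro h
    obtain ⟨e, he⟩ := exists_linearIndependent_row_comp_of_le_rank h
    have hrank : q ≤ (A.submatrix e id)ᵀ.rank := by
      rw [rank_transpose, LinearIndependent.rank_matrix (M := A.submatrix e id) he,
        Fintype.card_fin]
    obtain ⟨f, hf⟩ := exists_linearIndependent_row_comp_of_le_rank hrank
    refine ⟨e, f, ?_⟩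
    rw [← det_transpose, ← isUnit_iff_ne_zero, ← isUnit_iff_isUnit_det,
      ← linearIndependent_rows_iff_isUnit]
    exact hf
  · rintro ⟨e, f, hdet⟩
    simpa only [rank_of_det_ne_zero hdet, Fintype.card_fin] using A.rank_submatrix_le e f

theorem rank_pos_of_ne_zero {A : Matrix m n K} (hA : A ≠ 0) : 0 < A.rank := by
  obtain ⟨i, j, hij⟩ : ∃ i j, A i j ≠ 0 := by
    by_contra! h
    exact hA (Matrix.ext h)
  exact le_rank_iff_exists_submatrix_det_ne_zero.2
    ⟨fun _ : Fin 1 => i, fun _ => j, by rwa [det_fin_one]⟩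

end Minors

section GradedNakayama

variable {K R κ : Type*} [CommRing K] [CommRing R] [Algebra K R]
  (𝒜 : ℕ → Submodule K R) [GradedAlgebra 𝒜] {I : Ideal R} {θ : κ → R} {d : κ → ℕ} {M : ℕ}

theorem mk_mem_span_adjoin_of_mem_sup_span (hI : I.IsHomogeneous 𝒜) (hd : ∀ k, 0 < d k)
    (hθ : ∀ k, θ k ∈ 𝒜 (d k)) (hM : ∀ n, M ≤ n → ∀ x ∈ 𝒜 n, x ∈ I ⊔ Ideal.span (Set.range θ))
    (n : ℕ) (x : R) (hx : x ∈ 𝒜 n) :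
    Ideal.Quotient.mk I x ∈ Submodule.span
      (Algebra.adjoin K (Set.range fun k => Ideal.Quotient.mk I (θ k)))
      ((⨆ i : Fin M, 𝒜 i).map (Ideal.Quotient.mkₐ K I).toLinearMap : Set (R ⧸ I)) := by
  induction n using Nat.strong_induction_on generalizing x with
  | _ n ih =>
  set N := Submodule.span (Algebra.adjoin K (Set.range fun k => Ideal.Quotient.mk I (θ k)))
      ((⨆ i : Fin M, 𝒜 i).map (Ideal.Quotient.mkₐ K I).toLinearMap : Set (R ⧸ I))
  rcases lt_or_ge n M with hn | hn
  · exact Submodule.subset_span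
      (Submodule.mem_map_of_mem (le_iSup (fun i : Fin M => 𝒜 i) ⟨n, hn⟩ hx))
  obtain ⟨a, ha, b, hb, rfl⟩ := Submodule.mem_sup.1 (hM n hn x hx)
  obtain ⟨c, rfl⟩ := Finsupp.mem_span_range_iff_exists_finsupp.1 hb
  have hterm (k : κ) :
      Ideal.Quotient.mk I (DirectSum.decompose 𝒜 (c k • θ k) n : R) ∈ N := by
    rcases le_or_gt (d k) n with hk | hk
    · rw [smul_eq_mul, DirectSum.coe_decompose_mul_of_right_mem_of_le 𝒜 (hθ k) hk, map_mul,
        mul_comm]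
      exact N.smul_mem ⟨_, Algebra.subset_adjoin ⟨k, rfl⟩⟩
        (ih (n - d k) (Nat.sub_lt_self (hd k) hk) _ (SetLike.coe_mem _))
    · rw [smul_eq_mul, DirectSum.coe_decompose_mul_of_right_mem_of_not_le 𝒜 (hθ k) hk.not_ge,
        map_zero]
      exact N.zero_mem
  rw [← DirectSum.decompose_of_mem_same 𝒜 hx, DirectSum.decompose_add, DirectSum.add_apply,
    Submodule.coe_add, map_add, Ideal.Quotient.eq_zero_iff_mem.2 (hI n ha), zero_add,
    Finsupp.sum, DirectSum.decompose_sum]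
  simpa using N.sum_mem fun k _ => hterm k

theorem finite_adjoin_quotient_of_mem_sup_span [∀ n, Module.Finite K (𝒜 n)]
    (hI : I.IsHomogeneous 𝒜) (hd : ∀ k, 0 < d k)
    (hθ : ∀ k, θ k ∈ 𝒜 (d k)) (hM : ∀ n, M ≤ n → ∀ x ∈ 𝒜 n, x ∈ I ⊔ Ideal.span (Set.range θ)) :
    Module.Finite (Algebra.adjoin K (Set.range fun k => Ideal.Quotient.mk I (θ k))) (R ⧸ I) := by
  classical
  have hfg : ((⨆ i : Fin M, 𝒜 i).map (Ideal.Quotient.mkₐ K I).toLinearMap).FG :=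
    (Submodule.fg_iSup _ fun i => Module.Finite.iff_fg.1 inferInstance).map _
  obtain ⟨t, ht⟩ := hfg
  refine ⟨t, ?_⟩
  rw [← Submodule.span_span_of_tower K, ht, eq_top_iff]
  rintro y -
  obtain ⟨x, rfl⟩ := Ideal.Quotient.mk_surjective y
  rw [← DirectSum.sum_support_decompose 𝒜 x, map_sum]
  exact Submodule.sum_mem _ fun n _ =>
    mk_mem_span_adjoin_of_mem_sup_span 𝒜 hI hd hθ hM n _ (SetLike.coe_mem _)

end GradedNakayama

section TranscendenceDegree

variable {K R : Type*} [CommRing K] [IsDomain K] [CommRing R] [Algebra K R]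

theorem exists_isPrime_algebraicIndependent_mk {ι : Type*} {x : ι → R}
    (hx : AlgebraicIndependent K x) :
    ∃ P : Ideal R, P.IsPrime ∧ AlgebraicIndependent K fun i => Ideal.Quotient.mk P (x i) := by
  obtain ⟨P, hP, hcomap⟩ := Ideal.exists_comap_eq_of_mem_minimalPrimes_of_injective
    (f := (MvPolynomial.aeval x).toRingHom) hx ⊥ (by simp [IsDomain.minimalPrimes_eq_singleton_bot])
  refine ⟨P, hP, ?_⟩
  have haeval : MvPolynomial.aeval (fun i => Ideal.Quotient.mk P (x i)) =
      (Ideal.Quotient.mkₐ K P).comp (MvPolynomial.aeval x) := by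
    ext i
    simp
  rw [algebraicIndependent_iff_injective_aeval, haeval, injective_iff_map_eq_zero]
  intro f hf
  rw [← Ideal.mem_bot, ← hcomap]
  have hfP : MvPolynomial.aeval x f ∈ P := Ideal.Quotient.eq_zero_iff_mem.1 hf
  exact hfP

theorem isIntegral_adjoin_quotient {S A : Type*} [CommRing S] [CommRing A] [Algebra S A] (s : Set A)
    [Algebra.IsIntegral (Algebra.adjoin S s) A] (I : Ideal A) :
    Algebra.IsIntegral (Algebra.adjoin S (Ideal.Quotient.mkₐ S I '' s)) (A ⧸ I) := by
  rw [← AlgHom.map_adjoin]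
  refine ⟨fun z => ?_⟩
  obtain ⟨r, rfl⟩ := Ideal.Quotient.mk_surjective z
  exact (Algebra.IsIntegral.isIntegral (R := Algebra.adjoin S s) r).map_of_comp_eq
    ((Ideal.Quotient.mkₐ S I).subalgebraMap (Algebra.adjoin S s)).toRingHom
    (Ideal.Quotient.mkₐ S I).toRingHom rfl

theorem trdeg_le_mk_of_isIntegral_adjoin (s : Set R) [Algebra.IsIntegral (Algebra.adjoin K s) R] :
    Algebra.trdeg K R ≤ Cardinal.mk s := by
  refine ciSup_le' fun ⟨t, ht⟩ => ?_
  obtain ⟨P, hP, htP⟩ := exists_isPrime_algebraicIndependent_mk ht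
  have := isIntegral_adjoin_quotient (S := K) s P
  have halg : Algebra.IsAlgebraic (Algebra.adjoin K (Ideal.Quotient.mkₐ K P '' s)) (R ⧸ P) :=
    Algebra.IsIntegral.isAlgebraic
  calc Cardinal.mk t ≤ Algebra.trdeg K (R ⧸ P) := htP.cardinalMk_le_trdeg
    _ ≤ Cardinal.mk (Ideal.Quotient.mkₐ K P '' s) := Algebra.IsAlgebraic.trdeg_le_cardinalMk K _
    _ ≤ Cardinal.mk s := Cardinal.mk_image_le

end TranscendenceDegree

section HomogeneousIdeals

open MvPolynomial

attribute [local instance] gradedAlgebra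

theorem idealOfVars_le_radical_of_zeroLocus_subset {K σ : Type*} [Field K] [IsAlgClosed K]
    [Finite σ] {J : Ideal (MvPolynomial σ K)} (hJ : zeroLocus K J ⊆ {0}) :
    idealOfVars σ K ≤ J.radical := by
  rw [← vanishingIdeal_zeroLocus_eq_radical (K := K), Ideal.span_le]
  rintro _ ⟨s, rfl⟩ z hz
  obtain rfl : z = 0 := hJ hz
  simp

theorem exists_ne_zero_mem_zeroLocus_of_finrank_lt_trdeg {K σ E : Type*} [Field K] [IsAlgClosed K]
    [Finite σ] [AddCommGroup E] [Module K E] [FiniteDimensional K E]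
    {I : Ideal (MvPolynomial σ K)} (hI : I.IsHomogeneous (homogeneousSubmodule σ K))
    (f : (σ → K) →ₗ[K] E) (hf : Module.finrank K E < Algebra.trdeg K (MvPolynomial σ K ⧸ I)) :
    ∃ z ∈ zeroLocus K I, z ≠ 0 ∧ f z = 0 := by
  classical
  by_contra! hzero
  have := Fintype.ofFinite σ
  let b := Module.finBasis K E
  let θ := f.toMvPolynomial (Pi.basisFun K σ) b
  have hθ (z : σ → K) (k) : eval z (θ k) = b.repr (f z) k :=
    f.toMvPolynomial_eval_eq_apply (Pi.basisFun K σ) b k (Finsupp.equivFunOnFinite.symm z)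
  have hrad : idealOfVars σ K ≤ (I ⊔ Ideal.span (Set.range θ)).radical := by
    refine idealOfVars_le_radical_of_zeroLocus_subset fun z hz => ?_
    have hfz : f z = 0 := by
      refine b.ext_elem_iff.2 fun k => ?_
      rw [← hθ, map_zero]
      exact hz _ (le_sup_right (a := I) (Ideal.subset_span ⟨k, rfl⟩))
    by_contra h
    exact hzero z (zeroLocus_anti_mono le_sup_left hz) h hfz
  obtain ⟨M, hM⟩ := Ideal.exists_pow_le_of_le_radical_of_fg hrad (idealOfVars_fg σ K)
  have hfin (n : ℕ) : Module.Finite K (homogeneousSubmodule σ K n) :=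
    Module.Finite.iff_fg.2 (homogeneousSubmodule_fg σ K n)
  have hfinite := finite_adjoin_quotient_of_mem_sup_span (homogeneousSubmodule σ K) hI
    (d := fun _ => 1) (M := M) (fun _ => one_pos)
    (f.toMvPolynomial_isHomogeneous (Pi.basisFun K σ) b) fun n hn x hx =>
      hM <| (mem_pow_idealOfVars_iff M x).2 fun v hv => hn.trans
        (IsHomogeneous.degree_eq_sum_deg_support hx hv).le
  have hcard := Cardinal.mk_range_le_lift (f := fun k => Ideal.Quotient.mk I (θ k))
  rw [Cardinal.mk_fin, Cardinal.lift_natCast, Cardinal.lift_le_nat_iff] at hcard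
  have hint := Algebra.IsIntegral.of_finite (Algebra.adjoin K
    (Set.range fun k => Ideal.Quotient.mk I (θ k))) (MvPolynomial σ K ⧸ I)
  exact hf.not_ge ((trdeg_le_mk_of_isIntegral_adjoin _).trans hcard)

/-- The determinantal ideal generated by the `q × q` minors of the generic `m × n` matrix. The
minors are indexed by arbitrary maps `Fin q → m` and `Fin q → n`; a map that is not injective
contributes the generator zero. -/
noncomputable def determinantalIdeal (R m n : Type*) [CommRing R] (q : ℕ) :
    Ideal (MvPolynomial (m × n) R) :=
  Ideal.span (Set.range fun e : (Fin q → m) × (Fin q → n) =>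
    ((mvPolynomialX m n R).submatrix e.1 e.2).det)

theorem isHomogeneous_det_submatrix_mvPolynomialX {R m n k : Type*} [CommRing R] [Fintype k]
    [DecidableEq k] (e : k → m) (f : k → n) :
    ((mvPolynomialX m n R).submatrix e f).det.IsHomogeneous (Fintype.card k) := by
  rw [det_apply]
  refine IsHomogeneous.sum _ _ _ fun σ _ => ?_
  rw [Units.smul_def, zsmul_eq_mul, ← map_intCast (C : R →+* _)]
  refine IsHomogeneous.C_mul ?_ _
  simpa using IsHomogeneous.prod Finset.univ
    (fun i => (mvPolynomialX m n R).submatrix e f (σ i) i) _ fun i _ => isHomogeneous_X R _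

theorem isHomogeneous_determinantalIdeal (R m n : Type*) [CommRing R] (q : ℕ) :
    (determinantalIdeal R m n q).IsHomogeneous (homogeneousSubmodule (m × n) R) := by
  refine Ideal.homogeneous_span _ _ ?_
  rintro _ ⟨e, rfl⟩
  exact ⟨_, isHomogeneous_det_submatrix_mvPolynomialX e.1 e.2⟩

theorem mem_zeroLocus_determinantalIdeal {K m n : Type*} [Field K] [Finite m] [Fintype n] {q : ℕ}
    {z : m × n → K} :
    z ∈ zeroLocus K (determinantalIdeal K m n q) ↔ (Matrix.of fun i j => z (i, j)).rank < q := by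
  have haeval (e : Fin q → m) (f : Fin q → n) :
      aeval z ((mvPolynomialX m n K).submatrix e f).det =
        ((Matrix.of fun i j => z (i, j)).submatrix e f).det := by
    rw [AlgHom.map_det]
    congr 1
    ext i j
    simp
  rw [determinantalIdeal, zeroLocus_span, ← not_le, le_rank_iff_exists_submatrix_det_ne_zero]
  simp only [Set.mem_ofPred_eq, Set.forall_mem_range, Prod.forall, haeval, not_exists, not_not]

end HomogeneousIdeals

section RankStratum

open MvPolynomial

theorem algebraicIndependent_mk_X_of_exists_mem_zeroLocus {K σ ι : Type*} [Field K] [Infinite K]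
    {I : Ideal (MvPolynomial σ K)} {c : ι → σ} {g : MvPolynomial ι K} (hg : g ≠ 0)
    (h : ∀ t, eval t g ≠ 0 → ∃ z ∈ zeroLocus K I, z ∘ c = t) :
    AlgebraicIndependent K fun i => Ideal.Quotient.mk I (X (c i)) := by
  have haeval : aeval (fun i => Ideal.Quotient.mk I (X (c i))) =
      (Ideal.Quotient.mkₐ K I).comp (rename c) := by
    ext i
    simp
  rw [algebraicIndependent_iff_injective_aeval, haeval, injective_iff_map_eq_zero]
  intro f hf
  have hfI : rename c f ∈ I := Ideal.Quotient.eq_zero_iff_mem.1 hf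
  have hfg : f * g = 0 := by
    refine MvPolynomial.funext fun t => ?_
    rw [map_mul, map_zero, mul_eq_zero, or_iff_not_imp_right]
    intro ht
    obtain ⟨z, hz, rfl⟩ := h t ht
    simpa [aeval_rename, aeval_eq_eval] using hz _ hfI
  exact (mul_eq_zero.1 hfg).resolve_right hg

theorem rank_fromBlocks_mul_inv_mul_le {K k m n : Type*} [CommRing K] [Nontrivial K]
    [Fintype k] [DecidableEq k] [Fintype n] (P : Matrix k k K) (hP : IsUnit P.det)
    (Q : Matrix k n K) (R : Matrix m k K) :
    (fromBlocks P Q R (R * P⁻¹ * Q)).rank ≤ Fintype.card k := by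
  have hfactor : fromBlocks P Q R (R * P⁻¹ * Q) = fromRows P R * fromCols 1 (P⁻¹ * Q) := by
    rw [fromRows_mul_fromCols, Matrix.mul_one, Matrix.mul_one,
      mul_nonsing_inv_cancel_left _ _ hP, Matrix.mul_assoc]
  rw [hfactor]
  exact (rank_mul_le_left _ _).trans (rank_le_card_width _)

variable {K k m n : Type*} [Field K] [Fintype k]

theorem exists_mem_zeroLocus_determinantalIdeal [DecidableEq k] [Finite m] [Finite n]
    (t : k × (k ⊕ n) ⊕ m × k → K) (ht : (Matrix.of fun i j => t (.inl (i, .inl j))).det ≠ 0) :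
    ∃ z ∈ zeroLocus K (determinantalIdeal K (k ⊕ m) (k ⊕ n) (Fintype.card k + 1)),
      z ∘ Sum.elim (Prod.map .inl id) (Prod.map .inr .inl) = t := by
  have := Fintype.ofFinite n
  let P : Matrix k k K := .of fun i j => t (.inl (i, .inl j))
  let Q : Matrix k n K := .of fun i j => t (.inl (i, .inr j))
  let R : Matrix m k K := .of fun i j => t (.inr (i, j))
  refine ⟨fun a => fromBlocks P Q R (R * P⁻¹ * Q) a.1 a.2, ?_, ?_⟩
  · exact mem_zeroLocus_determinantalIdeal.2
      (Nat.lt_succ_of_le (rank_fromBlocks_mul_inv_mul_le P ht.isUnit Q R))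
  · ext (⟨i, j | j⟩ | ⟨i, j⟩) <;> rfl

theorem card_mul_add_card_mul_le_trdeg_determinantalIdeal [Infinite K] [Fintype m]
    [Fintype n] :
    ((Fintype.card k * (Fintype.card k + Fintype.card n) + Fintype.card m * Fintype.card k : ℕ) :
      Cardinal) ≤ Algebra.trdeg K (MvPolynomial ((k ⊕ m) × (k ⊕ n)) K ⧸
        determinantalIdeal K (k ⊕ m) (k ⊕ n) (Fintype.card k + 1)) := by
  classical
  let b (a : k × k) : k × (k ⊕ n) ⊕ m × k := .inl (Prod.map id .inl a)
  have hb : Function.Injective b :=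
    Sum.inl_injective.comp (Function.injective_id.prodMap Sum.inl_injective)
  have hg : rename b (mvPolynomialX k k K).det ≠ 0 :=
    (map_ne_zero_iff _ (rename_injective b hb)).2 (det_mvPolynomialX_ne_zero k K)
  have hindep := algebraicIndependent_mk_X_of_exists_mem_zeroLocus hg fun t ht =>
    exists_mem_zeroLocus_determinantalIdeal t <| by
      rw [eval_rename, RingHom.map_det] at ht
      convert ht
      ext i j
      simp [b]
  have hle := hindep.lift_cardinalMk_le_trdeg
  rw [Cardinal.mk_fintype, Cardinal.lift_natCast, Cardinal.nat_le_lift_iff] at hle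
  simpa using hle

end RankStratum

section LinearSubspace

open MvPolynomial

attribute [local instance] gradedAlgebra

variable {K m n : Type*} [Field K] [IsAlgClosed K] [Fintype m] [Fintype n]

theorem exists_rank_le_card_of_card_mul_card_lt_finrank {k : Type*} [Fintype k]
    (V : Submodule K (Matrix (k ⊕ m) (k ⊕ n) K))
    (hV : Fintype.card m * Fintype.card n < Module.finrank K V) :
    ∃ B ∈ V, B ≠ 0 ∧ B.rank ≤ Fintype.card k := by
  classical
  let e : ((k ⊕ m) × (k ⊕ n) → K) ≃ₗ[K] Matrix (k ⊕ m) (k ⊕ n) K :=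
    (LinearEquiv.curry K K _ _).trans (ofLinearEquiv K)
  have hcodim := V.finrank_quotient_add_finrank
  rw [Module.finrank_matrix, Module.finrank_self, mul_one, Fintype.card_sum, Fintype.card_sum]
    at hcodim
  have hdim : (Module.finrank K (Matrix (k ⊕ m) (k ⊕ n) K ⧸ V) : Cardinal) <
      Algebra.trdeg K (MvPolynomial ((k ⊕ m) × (k ⊕ n)) K ⧸
        determinantalIdeal K (k ⊕ m) (k ⊕ n) (Fintype.card k + 1)) :=
    (Nat.cast_lt.2 (by linarith)).trans_le card_mul_add_card_mul_le_trdeg_determinantalIdeal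
  obtain ⟨z, hz, hz0, hVz⟩ := exists_ne_zero_mem_zeroLocus_of_finrank_lt_trdeg
    (isHomogeneous_determinantalIdeal K _ _ _) (V.mkQ ∘ₗ e.toLinearMap) hdim
  exact ⟨e z, (Submodule.Quotient.mk_eq_zero V).1 hVz, e.map_ne_zero_iff.2 hz0,
    Nat.le_of_lt_succ (mem_zeroLocus_determinantalIdeal.1 hz)⟩

theorem exists_rank_le_of_lt_finrank (V : Submodule K (Matrix m n K)) {p : ℕ}
    (hV : (Fintype.card m - p) * (Fintype.card n - p) < Module.finrank K V) :
    ∃ B ∈ V, B ≠ 0 ∧ B.rank ≤ p := by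
  by_cases hp : p ≤ Fintype.card m ∧ p ≤ Fintype.card n
  · let em : m ≃ Fin p ⊕ Fin (Fintype.card m - p) := Fintype.equivOfCardEq (by simp [hp.1])
    let en : n ≃ Fin p ⊕ Fin (Fintype.card n - p) := Fintype.equivOfCardEq (by simp [hp.2])
    let e := reindexLinearEquiv K K em en
    obtain ⟨_, ⟨B, hB, rfl⟩, hB0, hrank⟩ :=
      exists_rank_le_card_of_card_mul_card_lt_finrank (V.map e.toLinearMap) (by
        simpa [LinearEquiv.finrank_map_eq] using hV)
    refine ⟨B, hB, e.map_ne_zero_iff.1 hB0, ?_⟩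
    simpa [e] using hrank
  · obtain ⟨B, hB, hB0⟩ :=
      V.ne_bot_iff.1 (Submodule.one_le_finrank_iff.1 (Nat.one_le_of_lt hV))
    have hheight := rank_le_card_height B
    have hwidth := rank_le_card_width B
    exact ⟨B, hB, hB0, by omega⟩

end LinearSubspace

section Kraus

variable {K m n l : Type*}

/-- The `n × l` matrix whose `i`-th column is the `j`-th column of the Kraus operator `A i`. -/
def krausColumn (A : l → Matrix n m K) (j : m) : Matrix n l K :=
  of fun a i => A i a j

theorem sum_mul_vecMulVec_star_mul_conjTranspose [CommSemiring K] [StarRing K] [Fintype m]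
    [Fintype l] (A : l → Matrix n m K) (u : m → K) :
    ∑ i, A i * vecMulVec u (star u) * (A i)ᴴ =
      (∑ j, u j • krausColumn A j) * (∑ j, u j • krausColumn A j)ᴴ := by
  have hcol (a : n) (i : l) : (∑ j, u j • krausColumn A j) a i = (A i *ᵥ u) a := by
    simp [krausColumn, Matrix.sum_apply, mulVec, dotProduct, mul_comm]
  ext a b
  simp only [Matrix.sum_apply, mul_vecMulVec, vecMulVec_mul, ← star_mulVec, vecMulVec_apply,
    mul_apply (N := (∑ j, u j • krausColumn A j)ᴴ), conjTranspose_apply, hcol, Pi.star_apply]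

theorem krausColumn_eq_zero_iff [Zero K] {A : l → Matrix n m K} : krausColumn A = 0 ↔ A = 0 := by
  simp only [funext_iff, ← Matrix.ext_iff]
  exact ⟨fun h i a j => h j a i, fun h j a i => h i a j⟩

variable [Field K] [IsAlgClosed K] [PartialOrder K] [StarRing K] [StarOrderedRing K]
  [Fintype m] [Fintype n] [Fintype l]

theorem exists_rank_sum_mul_vecMulVec_le (A : l → Matrix n m K) {p : ℕ}
    (hp : (Fintype.card n - p) * (Fintype.card l - p) <
      Module.finrank K (Submodule.span K (Set.range (krausColumn A)))) :
    ∃ u : m → K, u ≠ 0 ∧ (∑ i, A i * vecMulVec u (star u) * (A i)ᴴ) ≠ 0 ∧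
      (∑ i, A i * vecMulVec u (star u) * (A i)ᴴ).rank ≤ p := by
  obtain ⟨B, hB, hB0, hrank⟩ := exists_rank_le_of_lt_finrank _ hp
  obtain ⟨u, rfl⟩ := Submodule.mem_span_range_iff_exists_fun K |>.1 hB
  refine ⟨u, ?_, ?_, ?_⟩
  · rintro rfl
    simp at hB0
  · rwa [sum_mul_vecMulVec_star_mul_conjTranspose, Ne, self_mul_conjTranspose_eq_zero]
  · rwa [sum_mul_vecMulVec_star_mul_conjTranspose, rank_self_mul_conjTranspose]

theorem stmt16_general (A : l → Matrix n m K) (hA : A ≠ 0) :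
    (∀ p : ℕ, (Fintype.card n : ℤ) * Fintype.card l + 1 ≤
        (p : ℤ) * ((Fintype.card n : ℤ) + Fintype.card l - p) +
          Module.finrank K (Submodule.span K (Set.range (krausColumn A))) →
      ∃ u : m → K, u ≠ 0 ∧ (∑ i, A i * vecMulVec u (star u) * (A i)ᴴ) ≠ 0 ∧
        (∑ i, A i * vecMulVec u (star u) * (A i)ᴴ).rank ≤ p) ∧
    ((Fintype.card n - 1) * (Fintype.card l - 1) + 1 ≤
        Module.finrank K (Submodule.span K (Set.range (krausColumn A))) →
      ∃ u : m → K, u ≠ 0 ∧ (∑ i, A i * vecMulVec u (star u) * (A i)ᴴ).rank = 1) := by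
  refine ⟨fun p hp => exists_rank_sum_mul_vecMulVec_le A ?_, fun h1 => ?_⟩
  · by_cases h : p ≤ Fintype.card n ∧ p ≤ Fintype.card l
    · zify [h.1, h.2]
      linarith
    · have hspan : Submodule.span K (Set.range (krausColumn A)) ≠ ⊥ := fun hbot =>
        hA (krausColumn_eq_zero_iff.1 (funext fun j => Submodule.span_eq_bot.1 hbot _ ⟨j, rfl⟩))
      rw [mul_eq_zero.2 (by omega)]
      exact Nat.pos_of_ne_zero (mt Submodule.finrank_eq_zero.1 hspan)
  · obtain ⟨u, hu, hne, hrank⟩ := exists_rank_sum_mul_vecMulVec_le A h1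
    exact ⟨u, hu, hrank.antisymm (rank_pos_of_ne_zero hne)⟩

end Kraus

/-- with `B_j = [A₁ e_j … A_l e_j]` and `r = dim span(B₁,…,B_m)`, if
`p(n + l − p) + r ≥ nl + 1` then some nonzero `L(uu*)` has rank at most `p`; in particular if
`r ≥ (n−1)(l−1) + 1` then some `L(uu*)` has rank one. -/
theorem stmt16 (m n l : ℕ) (hm : 2 ≤ m) (hn : 2 ≤ n) (hl : 2 ≤ l)
    (A : Fin l → Matrix (Fin n) (Fin m) ℂ) (hA : LinearIndependent ℂ A)
    (r : ℕ)
    (hr : r = Module.finrank ℂ (Submodule.span ℂ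
      (Set.range (fun j : Fin m => (Matrix.of fun (p : Fin n) (i : Fin l) => A i p j :
        Matrix (Fin n) (Fin l) ℂ))))) :
    (∀ p : ℕ, 0 < p →
      ((n : ℤ) * l + 1 ≤ (p : ℤ) * ((n : ℤ) + l - p) + r) →
      ∃ u : Fin m → ℂ, u ≠ 0 ∧
        (∑ i, A i * Matrix.vecMulVec u (star u) * (A i)ᴴ) ≠ 0 ∧
        (∑ i, A i * Matrix.vecMulVec u (star u) * (A i)ᴴ).rank ≤ p) ∧
    ((n - 1) * (l - 1) + 1 ≤ r →
      ∃ u : Fin m → ℂ, u ≠ 0 ∧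
        (∑ i, A i * Matrix.vecMulVec u (star u) * (A i)ᴴ).rank = 1) := by
  have h := stmt16_general A fun h0 => hA.ne_zero ⟨0, by omega⟩ (congrFun h0 _)
  simp only [Fintype.card_fin] at h
  exact hr ▸ ⟨fun p _ => h.1 p, h.2⟩
end
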